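/- arXiv:1905.08470 — 2 statements merged into one kernel-verified Lean document; each statement's English description precedes it below -/
import Mathlib

section
/- In the semi-primitive cyclotomic setting (with T_0, T_1 arbitrary subsets of F_q), let a, b ∈ F_{q²} with b ≠ 0, and define U_1 = Σ_{x ∈ D_0} Σ_{y ∈ S_0} ζ_p^{Tr_{q²/p}(x(a+by))}. Then U_1 = −q|T_0| + q² if −ab^{−1} ∈ S_0 and b^{−1} ∈ D_0; U_1 = −q|T_0| if −ab^{−1} ∉ S_0 and b^{−1} ∈ D_0; and U_1 = 0 if b^{−1} ∈ D_1. -/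
noncomputable section

def zetaP (p : ℕ) : ℂ := Complex.exp (2 * Real.pi * Complex.I / p)

/-- The canonical additive character `ψ(x) = ζ_p^{Tr_{L/F_p}(x)}`. -/
def psiL (p : ℕ) (L : Type) [Field L] [Fintype L] [CharP L p] (x : L) : ℂ :=
  letI : Algebra (ZMod p) L := ZMod.algebra L p
  zetaP p ^ (Algebra.trace (ZMod p) L x).val

/-- `ψ_{a,b}(E) = Σ_{(x,y)∈E} ψ(ax+by)`. -/
def psiSum (p : ℕ) (L : Type) [Field L] [Fintype L] [CharP L p]
    (a b : L) (E : Set (L × L)) : ℂ :=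
  ∑ᶠ z ∈ E, psiL p L (a * z.1 + b * z.2)

/-- a subset of `F_{q²} × F_{q²}` of type Q. -/
def IsTypeQ (p q : ℕ) (L : Type) [Field L] [Fintype L] [CharP L p]
    (E : Set (L × L)) : Prop :=
  E.ncard = (q ^ 4 - 1) / 4 ∧
    ∀ a b : L, (a, b) ≠ ((0 : L), (0 : L)) →
      psiSum p L a b E = ((q : ℂ) ^ 2 - 1) / 4 ∨
      psiSum p L a b E = (-3 * (q : ℂ) ^ 2 - 1) / 4

/-- the cyclotomic class `C_i^{(N,q²)} = ω^i⟨ω^N⟩`. -/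
def cyc (L : Type) [Field L] (ω : L) (N i : ℕ) : Set L :=
  {x | ∃ k : ℕ, x = ω ^ i * (ω ^ N) ^ k}

/-- ω is a primitive element (generator of the multiplicative group). -/
def IsPrim (L : Type) [Field L] (ω : L) : Prop :=
  ∀ x : L, x ≠ 0 → ∃ n : ℕ, x = ω ^ n

/-!
For `x ∈ L` the inner sum runs over a set of `y` invariant under translation by the kernel of the
trace, so it vanishes unless `z ↦ χ (Tr (x * b * z))` is trivial on that kernel, that is, unless
`x * b ∈ K`. Elements of `Kˣ` are powers of `ω ^ (q + 1)`, hence of `ω ^ (2 * m)`, so `D₀` is a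
union of cosets of `Kˣ` and contains either all nonzero points of the line `K * b⁻¹` or none of
them. In the second case the double sum is zero; in the first one, summing over the line by
orthogonality of characters counts the `t ∈ T₀` equal to `Tr (-a * b⁻¹)`.
-/

open Finset

section Cyclotomy

variable {L : Type} [Field L] {ω x y : L} {N i j : ℕ}

lemma zero_notMem_iUnion_cyc (hω : ω ≠ 0) (R : Finset ℕ) : (0 : L) ∉ ⋃ i ∈ R, cyc L ω N i := by
  simp only [Set.mem_iUnion₂, not_exists]
  rintro i - ⟨k, hk⟩
  exact mul_ne_zero (pow_ne_zero _ hω) (pow_ne_zero _ (pow_ne_zero _ hω)) hk.symm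

lemma mul_mem_cyc (hx : x ∈ cyc L ω N i) (hy : y ∈ cyc L ω N j) : x * y ∈ cyc L ω N (i + j) := by
  obtain ⟨k, rfl⟩ := hx
  obtain ⟨l, rfl⟩ := hy
  exact ⟨k + l, by ring⟩

lemma modEq_of_mem_cyc (hω : ω ≠ 0) (hN : N ∣ orderOf ω) (hi : x ∈ cyc L ω N i)
    (hj : x ∈ cyc L ω N j) : i ≡ j [MOD N] := by
  obtain ⟨k, hk⟩ := hi
  obtain ⟨l, hl⟩ := hj
  have hpow : Units.mk0 ω hω ^ (i + N * k) = Units.mk0 ω hω ^ (j + N * l) := by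
    rw [Units.ext_iff]
    push_cast
    rw [Units.val_mk0, pow_add, pow_add, pow_mul, pow_mul, ← hk, hl]
  have hmod : i + N * k ≡ j + N * l [MOD N] := by
    rw [pow_eq_pow_iff_modEq, ← orderOf_units, Units.val_mk0] at hpow
    exact hpow.of_dvd hN
  simpa [Nat.ModEq] using hmod

lemma disjoint_iUnion_cyc_add {m : ℕ} (hω : ω ≠ 0) (hN : N ∣ orderOf ω) {R : Finset ℕ}
    (hR : ∀ i ∈ R, i < N) (hRm : ∀ i ∈ R, (i + m) % N ∉ R) :
    Disjoint (⋃ i ∈ R, cyc L ω N i) (⋃ i ∈ R, cyc L ω N (i + m)) := by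
  simp only [Set.disjoint_iUnion_left, Set.disjoint_iUnion_right]
  refine fun i hi j hj ↦ Set.disjoint_left.mpr fun x hxj hxi ↦ hRm i hi ?_
  have hmod : (i + m) % N = j % N := modEq_of_mem_cyc hω hN hxi hxj
  rwa [hmod, Nat.mod_eq_of_lt (hR j hj)]

variable [Fintype L]

lemma IsPrim.ne_zero (hω : IsPrim L ω) (hL : 2 < Fintype.card L) : ω ≠ 0 := by
  classical
  obtain ⟨x, hx⟩ : ∃ x : L, x ∉ ({0, 1} : Finset L) := by
    by_contra! hall
    have hcard : Fintype.card L ≤ #({0, 1} : Finset L) := card_le_card fun x _ ↦ hall x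
    exact (hcard.trans card_le_two).not_gt hL
  simp only [mem_insert, mem_singleton, not_or] at hx
  rintro rfl
  obtain ⟨n, rfl⟩ := hω x hx.1
  rcases eq_or_ne n 0 with rfl | hn
  · exact hx.2 (pow_zero 0)
  · exact hx.1 (zero_pow hn)

lemma IsPrim.orderOf_eq (hω : IsPrim L ω) (hω₀ : ω ≠ 0) : orderOf ω = Fintype.card L - 1 := by
  classical
  have hgen : ∀ u : Lˣ, u ∈ Subgroup.zpowers (Units.mk0 ω hω₀) := fun u ↦ by
    obtain ⟨n, hn⟩ := hω u u.ne_zero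
    exact ⟨n, by ext; simp [hn]⟩
  rw [← Fintype.card_units, ← Nat.card_eq_fintype_card,
    ← orderOf_eq_card_of_forall_mem_zpowers hgen, ← orderOf_units, Units.val_mk0]

variable {K : Type*} [Field K] [Fintype K] [Algebra K L]

lemma IsPrim.algebraMap_mem_cyc (hω : IsPrim L ω) (hω₀ : ω ≠ 0)
    (hN : N * (Fintype.card K - 1) ∣ Fintype.card L - 1) {c : K} (hc : c ≠ 0) :
    algebraMap K L c ∈ cyc L ω N 0 := by
  obtain ⟨n, hn⟩ := hω _ ((map_ne_zero (algebraMap K L)).mpr hc)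
  have hpow : ω ^ (n * (Fintype.card K - 1)) = 1 := by
    rw [pow_mul, ← hn, ← map_pow, FiniteField.pow_card_sub_one_eq_one c hc, map_one]
  have hdvd : N * (Fintype.card K - 1) ∣ n * (Fintype.card K - 1) :=
    hN.trans (hω.orderOf_eq hω₀ ▸ orderOf_dvd_of_pow_eq_one hpow)
  obtain ⟨k, rfl⟩ := Nat.dvd_of_mul_dvd_mul_right (Nat.sub_pos_of_lt Fintype.one_lt_card) hdvd
  exact ⟨k, by rw [hn, pow_zero, one_mul, pow_mul]⟩

lemma IsPrim.smul_mem_iUnion_cyc (hω : IsPrim L ω) (hω₀ : ω ≠ 0)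
    (hN : N * (Fintype.card K - 1) ∣ Fintype.card L - 1) (R : Finset ℕ) {c : K} (hc : c ≠ 0)
    (hx : x ∈ ⋃ i ∈ R, cyc L ω N i) : c • x ∈ ⋃ i ∈ R, cyc L ω N i := by
  simp only [Set.mem_iUnion₂] at hx ⊢
  obtain ⟨i, hi, hxi⟩ := hx
  refine ⟨i, hi, ?_⟩
  simpa only [Algebra.smul_def, zero_add] using mul_mem_cyc (hω.algebraMap_mem_cyc hω₀ hN hc) hxi

end Cyclotomy

section CharacterSums

variable {R : Type*} [CommRing R] [IsDomain R]

lemma sum_addChar_eq_zero_of_add_mem_iff {G : Type*} [AddCommGroup G] {ψ : AddChar G R}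
    {S : Finset G} {z : G} (hS : ∀ y, z + y ∈ S ↔ y ∈ S) (hz : ψ z ≠ 1) : ∑ y ∈ S, ψ y = 0 := by
  have hshift : ψ z * ∑ y ∈ S, ψ y = ∑ y ∈ S, ψ y := by
    rw [mul_sum]
    exact sum_equiv (Equiv.addLeft z) (fun y ↦ (hS y).symm)
      fun y _ ↦ (AddChar.map_add_eq_mul ψ z y).symm
  exact (mul_left_eq_self₀.mp hshift).resolve_left hz

lemma sum_erase_zero_addChar_mul {K : Type*} [CommRing K] [Fintype K] [DecidableEq K]
    {χ : AddChar K R} (hχ : χ.IsPrimitive) (s : K) :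
    ∑ c ∈ univ.erase 0, χ (c * s) = (if s = 0 then (Fintype.card K : R) else 0) - 1 := by
  rw [sum_erase_eq_sub (mem_univ 0), AddChar.sum_mulShift s hχ, zero_mul, AddChar.map_zero_eq_one]
  push_cast
  rfl

end CharacterSums

lemma sum_eq_sum_smul_of_mem {K V M : Type*} [DivisionRing K] [Fintype K] [DecidableEq K]
    [AddCommGroup V] [Module K V] [AddCommMonoid M] {D : Finset V} (h₀ : 0 ∉ D)
    (hD : ∀ c : K, c ≠ 0 → ∀ x ∈ D, c • x ∈ D) {v : V} (hv : v ∈ D) {f : V → M}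
    (hf : ∀ x, (∀ c : K, c • v ≠ x) → f x = 0) :
    ∑ x ∈ D, f x = ∑ c ∈ univ.erase (0 : K), f (c • v) := by
  have hv₀ : v ≠ 0 := ne_of_mem_of_not_mem hv h₀
  refine (sum_of_injOn (· • v) (smul_left_injective K hv₀).injOn ?_ ?_ fun _ _ ↦ rfl).symm
  · exact fun c hc ↦ hD c (ne_of_mem_erase hc) v hv
  · refine fun x hx hx_notMem ↦ hf x fun c hc ↦ hx_notMem ⟨c, ?_, hc⟩
    have hc₀ : c ≠ 0 := by
      rintro rfl
      exact h₀ (by rwa [← zero_smul K v, hc])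
    simpa using hc₀

section Trace

variable {K L : Type*} [Field K] [Field L] [Algebra K L]

section Separable

variable [FiniteDimensional K L] [Algebra.IsSeparable K L] {c : L}

lemma mem_range_algebraMap_of_trace_mul_eq_zero
    (h : ∀ z : L, Algebra.trace K L z = 0 → Algebra.trace K L (c * z) = 0) :
    c ∈ Set.range (algebraMap K L) := by
  obtain ⟨e, he⟩ := Algebra.trace_surjective K L 1
  refine ⟨Algebra.trace K L (c * e), ?_⟩
  have horth (y : L) : Algebra.trace K L (c * y) =
      Algebra.trace K L y * Algebra.trace K L (c * e) := by
    have hy := h (y - Algebra.trace K L y • e) (by simp [he])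
    rwa [mul_sub, mul_smul_comm, map_sub, map_smul, smul_eq_mul, sub_eq_zero] at hy
  refine sub_eq_zero.mp ((traceForm_nondegenerate K L).1 _ fun y ↦ ?_)
  rw [Algebra.traceForm_apply, sub_mul, map_sub, ← Algebra.smul_def, map_smul, smul_eq_mul,
    horth y, mul_comm, sub_self]

lemma exists_trace_eq_zero_and_addChar_ne_one {M : Type*} [CommMonoid M] {χ : AddChar K M}
    (hχ : χ.IsPrimitive) (hc : c ∉ Set.range (algebraMap K L)) :
    ∃ z : L, Algebra.trace K L z = 0 ∧ χ (Algebra.trace K L (c * z)) ≠ 1 := by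
  contrapose! hc
  refine mem_range_algebraMap_of_trace_mul_eq_zero fun z hz ↦ ?_
  by_contra hcz
  refine hχ hcz (DFunLike.ext _ _ fun k ↦ ?_)
  have hkz := hc (k • z) (by rw [map_smul, hz, smul_zero])
  rwa [mul_smul_comm, map_smul, smul_eq_mul, mul_comm] at hkz

end Separable

variable [Fintype L] [DecidableEq K] {R : Type*} [CommRing R] {χ : AddChar K R} {D : Finset L}

section Vanishing

variable [Finite K] [IsDomain R]

lemma sum_trace_preimage_eq_zero (hχ : χ.IsPrimitive) (T : Finset K) {x b : L} (a : L)
    (hxb : x * b ∉ Set.range (algebraMap K L)) :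
    ∑ y with Algebra.trace K L y ∈ T, χ (Algebra.trace K L (x * (a + b * y))) = 0 := by
  obtain ⟨z, hz, hz_ne⟩ := exists_trace_eq_zero_and_addChar_ne_one hχ hxb
  let ψ : AddChar L R := χ.compAddMonoidHom
    ((Algebra.trace K L).comp (LinearMap.mulLeft K (x * b))).toAddMonoidHom
  have hψ : ∑ y with Algebra.trace K L y ∈ T, ψ y = 0 :=
    sum_addChar_eq_zero_of_add_mem_iff (z := z) (by simp [hz]) hz_ne
  have hsplit (y : L) : χ (Algebra.trace K L (x * (a + b * y))) =
      χ (Algebra.trace K L (x * a)) * ψ y := by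
    rw [mul_add, ← mul_assoc, map_add, AddChar.map_add_eq_mul]
    rfl
  simp_rw [hsplit, ← mul_sum, hψ, mul_zero]

lemma sum_sum_trace_preimage_of_inv_notMem (hχ : χ.IsPrimitive) (h₀ : 0 ∉ D)
    (hD : ∀ c : K, c ≠ 0 → ∀ x ∈ D, c • x ∈ D) (T : Finset K) (a : L) {b : L} (hb₀ : b ≠ 0)
    (hb : b⁻¹ ∉ D) :
    ∑ x ∈ D, ∑ y with Algebra.trace K L y ∈ T, χ (Algebra.trace K L (x * (a + b * y))) = 0 := by
  refine sum_eq_zero fun x hx ↦ sum_trace_preimage_eq_zero hχ T a ?_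
  rintro ⟨c, hc⟩
  have hx₀ : x ≠ 0 := ne_of_mem_of_not_mem hx h₀
  have hc₀ : c ≠ 0 := by
    rintro rfl
    exact mul_ne_zero hx₀ hb₀ (by rw [← hc, map_zero])
  have hinv : c⁻¹ • x = b⁻¹ := by
    rw [Algebra.smul_def, map_inv₀, hc, mul_inv_rev, mul_assoc, inv_mul_cancel₀ hx₀, mul_one]
  exact hb (hinv ▸ hD c⁻¹ (inv_ne_zero hc₀) x hx)

end Vanishing

variable [Fintype K] {n : ℕ}

lemma card_trace_fiber (hL : Fintype.card L = Fintype.card K ^ (n + 1)) (t : K) :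
    #{y : L | Algebra.trace K L y = t} = Fintype.card K ^ n := by
  have hsurj := Algebra.trace_surjective K L
  have hfiber (t' : K) : #{y : L | Algebra.trace K L y = t'} = #{y : L | Algebra.trace K L y = t} :=
    AddMonoidHom.card_fiber_eq_of_mem_range (Algebra.trace K L) (hsurj t') (hsurj t)
  have hsum : Fintype.card L = Fintype.card K * #{y : L | Algebra.trace K L y = t} := by
    simpa [hfiber] using card_eq_sum_card_fiberwise (s := (univ : Finset L)) (t := univ)
      (f := Algebra.trace K L) (by simp)
  rw [hL, pow_succ'] at hsum
  exact (Nat.eq_of_mul_eq_mul_left Fintype.card_pos hsum).symm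

lemma sum_trace_preimage_smul_add (hL : Fintype.card L = Fintype.card K ^ (n + 1)) (T : Finset K)
    (c : K) (v : L) :
    ∑ y with Algebra.trace K L y ∈ T, χ (Algebra.trace K L (c • (v + y))) =
      Fintype.card K ^ n * ∑ t ∈ T, χ (c * (Algebra.trace K L v + t)) := by
  rw [← sum_fiberwise_of_maps_to (g := Algebra.trace K L) (t := T) (by simp), mul_sum]
  refine sum_congr rfl fun t ht ↦ ?_
  have hfiber : ({y ∈ ({y | Algebra.trace K L y ∈ T} : Finset L) | Algebra.trace K L y = t}) =
      ({y | Algebra.trace K L y = t} : Finset L) := by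
    grind
  have hconst : ∀ y ∈ ({y | Algebra.trace K L y = t} : Finset L),
      χ (Algebra.trace K L (c • (v + y))) = χ (c * (Algebra.trace K L v + t)) := by
    simp +contextual [mul_add]
  rw [hfiber, sum_congr rfl hconst, sum_const, card_trace_fiber hL, nsmul_eq_mul, Nat.cast_pow]

lemma sum_sum_trace_preimage_of_inv_mem [IsDomain R]
    (hL : Fintype.card L = Fintype.card K ^ (n + 1)) (hχ : χ.IsPrimitive) (h₀ : 0 ∉ D)
    (hD : ∀ c : K, c ≠ 0 → ∀ x ∈ D, c • x ∈ D) (T : Finset K) (a : L) {b : L} (hb : b⁻¹ ∈ D) :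
    ∑ x ∈ D, ∑ y with Algebra.trace K L y ∈ T, χ (Algebra.trace K L (x * (a + b * y))) =
      Fintype.card K ^ n *
        ((if Algebra.trace K L (-a * b⁻¹) ∈ T then (Fintype.card K : R) else 0) - #T) := by
  have hb₀ : b ≠ 0 := inv_eq_zero.not.mp (ne_of_mem_of_not_mem hb h₀)
  have hline (c : K) (y : L) : c • b⁻¹ * (a + b * y) = c • (a * b⁻¹ + y) := by
    rw [smul_mul_assoc, mul_add, inv_mul_cancel_left₀ hb₀, mul_comm b⁻¹]
  have hroot (t : K) : Algebra.trace K L (a * b⁻¹) + t = 0 ↔ Algebra.trace K L (-a * b⁻¹) = t := by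
    rw [neg_mul, map_neg, neg_eq_iff_add_eq_zero]
  rw [sum_eq_sum_smul_of_mem h₀ hD hb]
  · simp_rw [hline, sum_trace_preimage_smul_add hL, ← mul_sum]
    rw [sum_comm]
    simp_rw [sum_erase_zero_addChar_mul hχ, hroot, sum_sub_distrib, sum_ite_eq, sum_const,
      nsmul_one]
  · refine fun x hx ↦ sum_trace_preimage_eq_zero hχ T a ?_
    rintro ⟨c, hc⟩
    exact hx c (by rw [Algebra.smul_def, hc, mul_inv_cancel_right₀ hb₀])

end Trace

lemma exists_isPrimitive_psiL_eq_trace (p : ℕ) (K : Type*) (L : Type) [Field K] [Finite K] [Field L]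
    [Fintype L] [Algebra K L] [CharP L p] :
    ∃ χ : AddChar K ℂ, χ.IsPrimitive ∧ ∀ x : L, psiL p L x = χ (Algebra.trace K L x) := by
  have : Fact p.Prime := ⟨CharP.char_is_prime L p⟩
  have : CharP K p := (Algebra.charP_iff K L p).mpr inferInstance
  let : Algebra (ZMod p) L := ZMod.algebra L p
  let : Algebra (ZMod p) K := ZMod.algebra K p
  have : IsScalarTower (ZMod p) K L := IsScalarTower.of_algebraMap_eq' (Subsingleton.elim _ _)
  have hζ : IsPrimitiveRoot (zetaP p) p := Complex.isPrimitiveRoot_exp p (NeZero.ne p)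
  let χ : AddChar K ℂ := (AddChar.zmodChar p hζ.pow_eq_one).compAddMonoidHom
    (Algebra.trace (ZMod p) K).toAddMonoidHom
  have hχ (k : K) : χ k = zetaP p ^ (Algebra.trace (ZMod p) K k).val :=
    AddChar.zmodChar_apply hζ.pow_eq_one _
  refine ⟨χ, AddChar.IsPrimitive.of_ne_one (AddChar.ne_one_iff.mpr ?_), fun x ↦ ?_⟩
  · obtain ⟨k, hk⟩ := Algebra.trace_surjective (ZMod p) K 1
    refine ⟨k, ?_⟩
    rw [hχ, hk, ZMod.val_one, pow_one]
    exact hζ.ne_one (Fact.out : p.Prime).one_lt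
  · rw [hχ, Algebra.trace_trace]
    rfl

theorem semiprimitive_U1_general {p q n : ℕ} {K : Type*} {L : Type} [Field K] [Fintype K] [Field L]
    [Fintype L] [Algebra K L] [CharP L p] (hK : Fintype.card K = q)
    (hL : Fintype.card L = q ^ (n + 1)) {D : Set L} (h₀ : 0 ∉ D)
    (hD : ∀ c : K, c ≠ 0 → ∀ x ∈ D, c • x ∈ D) {T : Set K} {S : Set L}
    (hS : S = {x : L | Algebra.trace K L x ∈ T}) (a : L) {b : L} (hb : b ≠ 0) {U : ℂ}
    (hU : U = ∑ᶠ x ∈ D, ∑ᶠ y ∈ S, psiL p L (x * (a + b * y))) :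
    (-a * b⁻¹ ∈ S ∧ b⁻¹ ∈ D → U = -(q : ℂ) ^ n * T.ncard + (q : ℂ) ^ (n + 1)) ∧
      (-a * b⁻¹ ∉ S ∧ b⁻¹ ∈ D → U = -(q : ℂ) ^ n * T.ncard) ∧
      (b⁻¹ ∉ D → U = 0) := by
  classical
  subst hK
  obtain ⟨χ, hχ, hψ⟩ := exists_isPrimitive_psiL_eq_trace p K L
  lift D to Finset L using D.toFinite
  lift T to Finset K using T.toFinite
  obtain rfl : S = ({y : L | Algebra.trace K L y ∈ T} : Finset L) := by simp [hS]
  simp only [hψ, finsum_mem_coe_finset] at hU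
  simp only [mem_coe] at h₀ hD ⊢
  simp only [mem_filter_univ, Set.ncard_coe_finset]
  refine ⟨fun ⟨ha, hbD⟩ ↦ ?_, fun ⟨ha, hbD⟩ ↦ ?_, fun hbD ↦ ?_⟩
  · rw [hU, sum_sum_trace_preimage_of_inv_mem hL hχ h₀ hD T a hbD, if_pos ha]
    ring
  · rw [hU, sum_sum_trace_preimage_of_inv_mem hL hχ h₀ hD T a hbD, if_neg ha]
    ring
  · rw [hU, sum_sum_trace_preimage_of_inv_notMem hχ h₀ hD T a hb hbD]

/-- Lemma 3.5: evaluation of `U₁`. -/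
theorem semiprimitive_U1
    (p s q m l t : ℕ) (hp : p.Prime) (hpodd : p ≠ 2) (hs : 0 < s) (hq : q = p ^ s)
    (hm : 0 < m) (hdvd : 2 * m ∣ q + 1)
    (hl : 0 < l) (hldvd : 2 * m ∣ p ^ l + 1)
    (hlmin : ∀ l', 0 < l' → 2 * m ∣ p ^ l' + 1 → l ≤ l')
    (ht : s = l * t)
    (K L : Type) [Field K] [Fintype K] [Field L] [Fintype L] [Algebra K L] [CharP L p]
    (hK : Fintype.card K = q) (hL : Fintype.card L = q ^ 2)
    (ω : L) (hω : IsPrim L ω)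
    (Kst : Finset ℕ) (hKsub : ∀ k ∈ Kst, k < 2 * m) (hKcard : Kst.card = m)
    (hKdisj : ∀ k ∈ Kst, (k + m) % (2 * m) ∉ Kst)
    (D₀ D₁ : Set L)
    (hD₀ : D₀ = ⋃ i ∈ Kst, cyc L ω (2 * m) i)
    (hD₁ : D₁ = ⋃ i ∈ Kst, cyc L ω (2 * m) (i + m))
    (T₀ T₁ : Set K)
    (S₀ S₁ : Set L)
    (hS₀ : S₀ = {x : L | Algebra.trace K L x ∈ T₀})
    (hS₁ : S₁ = {x : L | Algebra.trace K L (x * ω ^ m) ∈ T₁})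
    (a b : L) (hb : b ≠ 0)
    (U₁ : ℂ) (hU₁ : U₁ = ∑ᶠ x ∈ D₀, ∑ᶠ y ∈ S₀, psiL p L (x * (a + b * y)))
    : (-a * b⁻¹ ∈ S₀ ∧ b⁻¹ ∈ D₀ → U₁ = -(q : ℂ) * T₀.ncard + (q : ℂ) ^ 2) ∧
      (-a * b⁻¹ ∉ S₀ ∧ b⁻¹ ∈ D₀ → U₁ = -(q : ℂ) * T₀.ncard) ∧
      (b⁻¹ ∈ D₁ → U₁ = 0) := by
  subst hD₀ hD₁
  have hω₀ : ω ≠ 0 := hω.ne_zero (by rw [hL]; nlinarith [hK ▸ Fintype.one_lt_card (α := K)])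
  have hdvd_card : 2 * m * (Fintype.card K - 1) ∣ Fintype.card L - 1 := by
    rw [hK, hL, ← one_pow 2, Nat.sq_sub_sq]
    exact mul_dvd_mul_right hdvd _
  have hdvd_order : 2 * m ∣ orderOf ω := hω.orderOf_eq hω₀ ▸ dvd_of_mul_right_dvd hdvd_card
  have hdisj := disjoint_iUnion_cyc_add hω₀ hdvd_order hKsub hKdisj
  obtain ⟨hin, hout, hzero⟩ := semiprimitive_U1_general (n := 1) hK hL
    (zero_notMem_iUnion_cyc hω₀ Kst)
    (fun _ hc _ ↦ hω.smul_mem_iUnion_cyc hω₀ hdvd_card Kst hc) hS₀ a hb hU₁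
  rw [pow_one] at hin hout
  exact ⟨hin, hout, fun hb₁ ↦ hzero (hdisj.notMem_of_mem_right hb₁)⟩

end
end

section
/- Let q = p^s be an odd prime power, ω a primitive element of F_{q²}, and m a positive integer with 2m | q+1. Let T_0, T_1 be arbitrary subsets of F_q and set S_0 = {x ∈ F_{q²} : Tr_{q²/q}(x) ∈ T_0}, S_1 = {x ∈ F_{q²} : Tr_{q²/q}(xω^m) ∈ T_1}. For a, b ∈ F_{q²} with b ≠ 0, define U_3 = Σ_{x ∈ F_{q²}^*} Σ_{y ∈ S_0 ∩ S_1} ζ_p^{Tr_{q²/p}(x(a+by))}. Then U_3 = −|T_0||T_1| + q² if −ab^{−1} ∈ S_0 ∩ S_1, and U_3 = −|T_0||T_1| otherwise. -/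
noncomputable section

/-!
The sum of a nontrivial additive character `x ↦ ψ(xc)` over all `x` is the field cardinality if
`c = 0` and vanishes otherwise. Summing over `x` first therefore leaves `-1` for every
`y ∈ S₀ ∩ S₁`, plus the correction `q²` at the only zero `y = -ab⁻¹` of `a + by`. To count
`S₀ ∩ S₁`, note that `ω ^ m ∉ K`, so that `1, ω ^ m` is a `K`-basis of `L`; the values
`Tr(y), Tr(yω ^ m)` are then the coordinates of `y` in the trace-dual basis, and hence can be
prescribed independently.
-/

section CharacterSum

variable {R : Type*} [CommRing R] [IsDomain R]

theorem finsum_ne_zero_addChar_mul {A : Type*} [CommRing A] [Finite A] [DecidableEq A]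
    {ψ : AddChar A R} (hψ : ψ.IsPrimitive) (c : A) :
    ∑ᶠ x ∈ {x : A | x ≠ 0}, ψ (x * c) = (if c = 0 then (Nat.card A : R) else 0) - 1 := by
  have := Fintype.ofFinite A
  have hsplit : ψ (0 * c) + ∑ᶠ x ∈ {x : A | x ≠ 0}, ψ (x * c) = ∑ᶠ x, ψ (x * c) :=
    add_finsum_cond_ne (f := fun x => ψ (x * c)) 0 (Set.toFinite _)
  rw [finsum_eq_sum_of_fintype fun x => ψ (x * c), AddChar.sum_mulShift c hψ, zero_mul,
    ψ.map_zero_eq_one, ← Nat.card_eq_fintype_card] at hsplit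
  rw [eq_sub_iff_add_eq', hsplit, Nat.cast_ite, Nat.cast_zero]

theorem finsum_ne_zero_finsum_mem_addChar {F : Type*} [Field F] [Finite F]
    {ψ : AddChar F R} (hψ : ψ ≠ 1) (E : Set F) (a : F) {b : F} (hb : b ≠ 0) :
    ∑ᶠ x ∈ {x : F | x ≠ 0}, ∑ᶠ y ∈ E, ψ (x * (a + b * y)) =
      E.indicator (fun _ => (Nat.card F : R)) (-a * b⁻¹) - E.ncard := by
  classical
  have hzero (y : F) : a + b * y = 0 ↔ y = -a * b⁻¹ := by
    rw [eq_mul_inv_iff_mul_eq₀ hb, mul_comm y, eq_neg_iff_add_eq_zero, add_comm]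
  have := Fintype.ofFinite F
  rw [finsum_mem_comm _ (Set.toFinite _) E.toFinite]
  simp only [finsum_ne_zero_addChar_mul (AddChar.IsPrimitive.of_ne_one hψ), hzero]
  rw [finsum_mem_eq_toFinset_sum, Finset.sum_sub_distrib, Finset.sum_ite_eq', Finset.sum_const,
    nsmul_one, ← Set.ncard_eq_toFinset_card', Set.indicator_apply]
  simp only [Set.mem_toFinset]

end CharacterSum

theorem finrank_eq_of_natCard_eq_pow {K V : Type*} [DivisionRing K] [Finite K] [AddCommGroup V]
    [Module K V] {n : ℕ} (hcard : Nat.card V = Nat.card K ^ n) : Module.finrank K V = n := by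
  have : Finite V :=
    Nat.finite_of_card_ne_zero (hcard ▸ pow_ne_zero n Finite.card_pos.ne')
  exact Nat.pow_right_injective Finite.one_lt_card (Module.natCard_eq_pow_finrank.symm.trans hcard)

theorem linearIndependent_one_pair_iff {K A : Type*} [Field K] [Ring A] [Nontrivial A]
    [Algebra K A] (x : A) :
    LinearIndependent K ![1, x] ↔ x ∉ Set.range (algebraMap K A) := by
  simp [LinearIndependent.pair_iff' one_ne_zero, Algebra.algebraMap_eq_smul_one]

section Trace

variable {K L : Type*} [Field K] [Field L] [Algebra K L]

theorem ncard_forall_trace_mul_basis_mem [Algebra.IsSeparable K L] {ι : Type*} [Fintype ι]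
    (β : Module.Basis ι K L) (T : ι → Set K) :
    {y : L | ∀ i, Algebra.trace K L (y * β i) ∈ T i}.ncard = ∏ i, (T i).ncard := by
  classical
  have : FiniteDimensional K L := β.finiteDimensional_of_finite
  have hpreimage : {y : L | ∀ i, Algebra.trace K L (y * β i) ∈ T i} =
      β.traceDual.equivFun ⁻¹' Set.univ.pi T := by
    ext y
    simp [Module.Basis.traceDual_repr_apply]
  rw [hpreimage, Set.ncard_preimage_of_injective_subset_range β.traceDual.equivFun.injective
      (by simp [β.traceDual.equivFun.surjective.range_eq]),
    ← Nat.card_coe_set_eq, Nat.card_congr (Equiv.Set.univPi T), Nat.card_pi]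
  rfl

theorem ncard_trace_mem_inter_trace_mul_mem [Algebra.IsSeparable K L]
    (hrank : Module.finrank K L = 2) {θ : L} (hθ : θ ∉ Set.range (algebraMap K L))
    (T₀ T₁ : Set K) :
    ({y : L | Algebra.trace K L y ∈ T₀} ∩ {y : L | Algebra.trace K L (y * θ) ∈ T₁}).ncard =
      T₀.ncard * T₁.ncard := by
  have : FiniteDimensional K L := Module.finite_of_finrank_eq_succ hrank
  let β : Module.Basis (Fin 2) K L := basisOfLinearIndependentOfCardEqFinrank
    ((linearIndependent_one_pair_iff θ).mpr hθ) (by rw [hrank, Fintype.card_fin])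
  simpa [β, Fin.forall_fin_two, Set.ofPred_and] using
    ncard_forall_trace_mul_basis_mem β ![T₀, T₁]

end Trace

section CanonicalCharacter

variable (p : ℕ) (L : Type) [Field L] [Fintype L] [CharP L p]

/-- The canonical additive character `psiL p L` of `L`, bundled as an `AddChar`. -/
def psiAddChar : AddChar L ℂ where
  toFun := psiL p L
  map_zero_eq_one' := by simp [psiL]
  map_add_eq_mul' x y := by
    have : NeZero p := ⟨CharP.char_ne_zero_of_finite L p⟩
    let _ : Algebra (ZMod p) L := ZMod.algebra L p
    have hζ : zetaP p ^ p = 1 := (Complex.isPrimitiveRoot_exp p (NeZero.ne p)).pow_eq_one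
    simp only [psiL, map_add, ← AddChar.zmodChar_apply hζ, AddChar.map_add_eq_mul]

theorem psiAddChar_ne_one : psiAddChar p L ≠ 1 := by
  have : Fact p.Prime := ⟨CharP.char_is_prime L p⟩
  let _ : Algebra (ZMod p) L := ZMod.algebra L p
  obtain ⟨x, hx⟩ := Algebra.trace_surjective (ZMod p) L 1
  have hval : psiAddChar p L x = zetaP p := by
    change zetaP p ^ (Algebra.trace (ZMod p) L x).val = zetaP p
    rw [hx, ZMod.val_one, pow_one]
  refine AddChar.ne_one_iff.mpr ⟨x, ?_⟩
  rw [hval]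
  exact (Complex.isPrimitiveRoot_exp p (NeZero.ne p)).ne_one (Fact.out : p.Prime).one_lt

end CanonicalCharacter

section PrimitiveElement

variable {K : Type*} {L : Type} [Field K] [Field L] [Finite L] [Algebra K L] {ω : L} {n : ℕ}

theorem IsPrim.card_sub_one_dvd_of_pow_mem_range (hω : IsPrim L ω)
    (hn : ω ^ n ∈ Set.range (algebraMap K L)) : Nat.card L - 1 ∣ n * (Nat.card K - 1) := by
  obtain ⟨c, hc⟩ := hn
  have hpow (x : Lˣ) : x ^ (n * (Nat.card K - 1)) = 1 := by
    obtain ⟨k, hk⟩ := hω x x.ne_zero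
    have hxn : algebraMap K L (c ^ k) = (x : L) ^ n := by rw [hk, pow_right_comm, ← hc, map_pow]
    have hne : c ^ k ≠ 0 := by
      rw [← map_ne_zero (algebraMap K L), hxn]
      exact pow_ne_zero n x.ne_zero
    have hxn' : Units.map (algebraMap K L).toMonoidHom (Units.mk0 _ hne) = x ^ n := Units.ext hxn
    rw [pow_mul, ← hxn', ← map_pow, ← Nat.card_units, pow_card_eq_one', map_one]
  rw [← Nat.card_units, ← IsCyclic.exponent_eq_card]
  exact Monoid.exponent_dvd_of_forall_pow_eq_one hpow

theorem IsPrim.card_add_one_dvd_of_pow_mem_range (hω : IsPrim L ω)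
    (hrank : Module.finrank K L = 2) (hn : ω ^ n ∈ Set.range (algebraMap K L)) :
    Nat.card K + 1 ∣ n := by
  have : Finite K := Finite.of_injective _ (algebraMap K L).injective
  have hdvd := hω.card_sub_one_dvd_of_pow_mem_range hn
  rw [Module.natCard_eq_pow_finrank (K := K) (V := L), hrank, ← one_pow 2, Nat.sq_sub_sq,
    one_pow] at hdvd
  exact Nat.dvd_of_mul_dvd_mul_right (Nat.sub_pos_of_lt Finite.one_lt_card) hdvd

theorem IsPrim.pow_notMem_range_algebraMap (hω : IsPrim L ω) (hrank : Module.finrank K L = 2)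
    (hn : 0 < n) (hlt : n < Nat.card K + 1) : ω ^ n ∉ Set.range (algebraMap K L) :=
  fun hmem => hlt.not_ge (Nat.le_of_dvd hn (hω.card_add_one_dvd_of_pow_mem_range hrank hmem))

end PrimitiveElement

theorem semiprimitive_U3_general {K L R : Type*} [Field K] [Field L] [Finite L] [Algebra K L]
    [CommRing R] [IsDomain R] (hrank : Module.finrank K L = 2)
    {θ : L} (hθ : θ ∉ Set.range (algebraMap K L)) (T₀ T₁ : Set K) (S₀ S₁ : Set L)
    (hS₀ : S₀ = {x : L | Algebra.trace K L x ∈ T₀})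
    (hS₁ : S₁ = {x : L | Algebra.trace K L (x * θ) ∈ T₁})
    {ψ : AddChar L R} (hψ : ψ ≠ 1) (a : L) {b : L} (hb : b ≠ 0) (U₃ : R)
    (hU₃ : U₃ = ∑ᶠ x ∈ {x : L | x ≠ 0}, ∑ᶠ y ∈ S₀ ∩ S₁, ψ (x * (a + b * y))) :
    (-a * b⁻¹ ∈ S₀ ∩ S₁ → U₃ = -(T₀.ncard : R) * T₁.ncard + (Nat.card K : R) ^ 2) ∧
      (-a * b⁻¹ ∉ S₀ ∩ S₁ → U₃ = -(T₀.ncard : R) * T₁.ncard) := by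
  have : Finite K := Finite.of_injective _ (algebraMap K L).injective
  have hcardL : Nat.card L = Nat.card K ^ 2 := hrank ▸ Module.natCard_eq_pow_finrank
  have hcard : (S₀ ∩ S₁).ncard = T₀.ncard * T₁.ncard := by
    rw [hS₀, hS₁, ncard_trace_mem_inter_trace_mul_mem hrank hθ]
  rw [finsum_ne_zero_finsum_mem_addChar hψ _ a hb, hcard, hcardL] at hU₃
  push_cast at hU₃
  constructor <;> intro hmem
  · rw [hU₃, Set.indicator_of_mem hmem]
    ring
  · rw [hU₃, Set.indicator_of_notMem hmem]
    ring

/-- Lemma 3.7: evaluation of `U₃`. -/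
theorem semiprimitive_U3
    (p s q m : ℕ) (hp : p.Prime) (hpodd : p ≠ 2) (hs : 0 < s) (hq : q = p ^ s)
    (hm : 0 < m) (hdvd : 2 * m ∣ q + 1)
    (K L : Type) [Field K] [Fintype K] [Field L] [Fintype L] [Algebra K L] [CharP L p]
    (hK : Fintype.card K = q) (hL : Fintype.card L = q ^ 2)
    (ω : L) (hω : IsPrim L ω)
    (T₀ T₁ : Set K)
    (S₀ S₁ : Set L)
    (hS₀ : S₀ = {x : L | Algebra.trace K L x ∈ T₀})
    (hS₁ : S₁ = {x : L | Algebra.trace K L (x * ω ^ m) ∈ T₁})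
    (a b : L) (hb : b ≠ 0)
    (U₃ : ℂ)
    (hU₃ : U₃ = ∑ᶠ x ∈ {x : L | x ≠ 0}, ∑ᶠ y ∈ S₀ ∩ S₁, psiL p L (x * (a + b * y)))
    : (-a * b⁻¹ ∈ S₀ ∩ S₁ →
        U₃ = -(T₀.ncard : ℂ) * T₁.ncard + (q : ℂ) ^ 2) ∧
      (-a * b⁻¹ ∉ S₀ ∩ S₁ → U₃ = -(T₀.ncard : ℂ) * T₁.ncard) := by
  rw [← Nat.card_eq_fintype_card] at hK hL
  have hrank : Module.finrank K L = 2 := finrank_eq_of_natCard_eq_pow (by rw [hL, hK])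
  have hm_lt : m < Nat.card K + 1 := by
    have := Nat.le_of_dvd q.succ_pos hdvd
    omega
  have hθ := hω.pow_notMem_range_algebraMap hrank hm hm_lt
  rw [← hK]
  exact semiprimitive_U3_general hrank hθ T₀ T₁ S₀ S₁ hS₀ hS₁ (psiAddChar_ne_one p L) a hb U₃ hU₃

end
end
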